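/- Let α = (α_1,…,α_d) be a multi-index with α_i ∈ (0,2] for i = 1,…,d, and let η > 0. Then ∫_{ℝ^d} (1 + S_α(ξ))^{−η} dξ < ∞ (integral with respect to Lebesgue measure) if and only if η > Σ_{i=1}^d 1/α_i. -/

import Mathlib

open MeasureTheory

/-- `S_α(ξ) = ∑ i |ξ_i|^{α_i}`. -/
noncomputable def Sa {d : ℕ} (α : Fin d → ℝ) (ξ : Fin d → ℝ) : ℝ :=
  ∑ i, |ξ i| ^ (α i)

/-- The anisotropic box `|ξ_i| ≤ t^{1/α_i}`. -/
def aBox {d : ℕ} (α : Fin d → ℝ) (t : ℝ) : Set (Fin d → ℝ) :=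
  Set.Icc (fun i => -(t ^ (1 / α i))) (fun i => t ^ (1 / α i))

theorem aBox_volume {d : ℕ} (α : Fin d → ℝ) (t : ℝ) (ht : 0 < t) :
    volume (aBox α t) = ENNReal.ofReal (2 ^ d * t ^ (∑ i, 1 / α i)) := by
  unfold aBox
  rw [Real.volume_Icc_pi, ← ENNReal.ofReal_prod_of_nonneg]
  · congr 1
    rw [Real.rpow_sum_of_pos ht]
    have : ∀ i ∈ (Finset.univ : Finset (Fin d)), t ^ (1 / α i) - -(t ^ (1 / α i)) = 2 * t ^ (1 / α i) := by
      intro i _; ring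
    rw [Finset.prod_congr rfl this, Finset.prod_mul_distrib]
    simp
  · intro i _
    have := Real.rpow_nonneg ht.le (1 / α i)
    linarith

theorem aBox_mono {d : ℕ} (α : Fin d → ℝ) (hα : ∀ i, 0 < α i) (s t : ℝ) (hs : 0 < s)
    (hst : s ≤ t) : aBox α s ⊆ aBox α t := by
  have h : ∀ i, s ^ (1 / α i) ≤ t ^ (1 / α i) := fun i =>
    Real.rpow_le_rpow hs.le hst (one_div_pos.2 (hα i)).le
  exact Set.Icc_subset_Icc (fun i => neg_le_neg (h i)) h

theorem Sa_nonneg {d : ℕ} (α : Fin d → ℝ) (ξ : Fin d → ℝ) : 0 ≤ Sa α ξ :=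
  Finset.sum_nonneg fun i _ => Real.rpow_nonneg (abs_nonneg _) _

theorem Sa_le_of_mem {d : ℕ} (α : Fin d → ℝ) (hα : ∀ i, 0 < α i) (t : ℝ) (ht : 0 < t)
    (ξ : Fin d → ℝ) (h : ξ ∈ aBox α t) : Sa α ξ ≤ d * t := by
  have : ∀ i ∈ (Finset.univ : Finset (Fin d)), |ξ i| ^ α i ≤ t := by
    intro i _
    have h1 : |ξ i| ≤ t ^ (1 / α i) := abs_le.2 ⟨h.1 i, h.2 i⟩
    calc |ξ i| ^ α i ≤ (t ^ (1 / α i)) ^ α i :=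
          Real.rpow_le_rpow (abs_nonneg _) h1 (hα i).le
      _ = t := by
          rw [← Real.rpow_mul ht.le, one_div_mul_cancel (hα i).ne', Real.rpow_one]
  simpa [Sa] using Finset.sum_le_sum this

theorem shell_bound {d : ℕ} (hd : 0 < d) (α : Fin d → ℝ) (hα : ∀ i, 0 < α i) (η : ℝ)
    (hη : 0 < η) (hle : η ≤ ∑ i, 1 / α i) (s : ℝ) (hs : 1 ≤ s) :
    ENNReal.ofReal ((1 + d : ℝ) ^ (-η) * (2 ^ d * (1 - (2:ℝ) ^ (-(∑ i, 1 / α i))))) ≤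
      ∫⁻ ξ in aBox α (2 * s) \ aBox α s, ENNReal.ofReal ((1 + Sa α ξ) ^ (-η)) := by
  have hs0 : 0 < s := by linarith
  set σ := ∑ i, 1 / α i with hσ
  have hmeas : ∀ t, MeasurableSet (aBox α t) := fun t => measurableSet_Icc
  have hvol : volume (aBox α (2 * s) \ aBox α s)
      = ENNReal.ofReal (2 ^ d * (2 * s) ^ σ - 2 ^ d * s ^ σ) := by
    rw [measure_sdiff (aBox_mono α hα s (2 * s) hs0 (by linarith)) (hmeas s).nullMeasurableSet
      (by rw [aBox_volume α s hs0]; exact ENNReal.ofReal_ne_top),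
      aBox_volume α s hs0, aBox_volume α (2 * s) (by linarith), ENNReal.ofReal_sub]
    positivity
  calc _ ≤ ENNReal.ofReal (((1 + d) * (2 * s)) ^ (-η)) * volume (aBox α (2 * s) \ aBox α s) := by
        rw [hvol, ← ENNReal.ofReal_mul (by positivity)]
        apply ENNReal.ofReal_le_ofReal
        rw [Real.mul_rpow (by positivity) (by positivity), mul_assoc]
        apply mul_le_mul_of_nonneg_left _ (by positivity)
        have e1 : 2 ^ d * (2 * s) ^ σ - 2 ^ d * s ^ σ
            = (2 * s) ^ σ * (2 ^ d * (1 - (2:ℝ) ^ (-σ))) := by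
          have : s ^ σ = (2 * s) ^ σ * (2:ℝ) ^ (-σ) := by
            rw [Real.mul_rpow (by norm_num) hs0.le, mul_right_comm,
              ← Real.rpow_add (by norm_num)]
            simp
          rw [this]; ring
        rw [e1, ← mul_assoc, ← Real.rpow_add (by positivity)]
        have h2 : 1 ≤ (2 * s) ^ (-η + σ) := Real.one_le_rpow (by linarith) (by linarith)
        have h3 : (2:ℝ) ^ (-σ) ≤ 1 :=
          Real.rpow_le_one_of_one_le_of_nonpos (by norm_num) (by linarith)
        have h4 : 0 ≤ 2 ^ d * (1 - (2:ℝ) ^ (-σ)) := mul_nonneg (by positivity) (by linarith)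
        nlinarith
    _ = ∫⁻ ξ in aBox α (2 * s) \ aBox α s, ENNReal.ofReal (((1 + d) * (2 * s)) ^ (-η)) := by
        rw [setLIntegral_const]
    _ ≤ _ := by
        apply setLIntegral_mono' ((hmeas _).diff (hmeas _))
        intro ξ hξ
        apply ENNReal.ofReal_le_ofReal
        apply Real.rpow_le_rpow_of_nonpos
        · have := Sa_nonneg α ξ
          linarith
        · have := Sa_le_of_mem α hα (2 * s) (by linarith) ξ hξ.1
          nlinarith
        · linarith

theorem box_bound {d : ℕ} (hd : 0 < d) (α : Fin d → ℝ) (hα : ∀ i, 0 < α i) (η : ℝ)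
    (hη : 0 < η) (hle : η ≤ ∑ i, 1 / α i) (n : ℕ) :
    n * ENNReal.ofReal ((1 + d : ℝ) ^ (-η) * (2 ^ d * (1 - (2:ℝ) ^ (-(∑ i, 1 / α i))))) ≤
      ∫⁻ ξ in aBox α (2 ^ n), ENNReal.ofReal ((1 + Sa α ξ) ^ (-η)) := by
  induction n with
  | zero => simp
  | succ n ih =>
    have h1 : (1:ℝ) ≤ 2 ^ n := one_le_pow₀ (by norm_num)
    have h := shell_bound hd α hα η hη hle (2 ^ n) h1
    have hsub := aBox_mono α hα (2 ^ n) (2 * 2 ^ n) (by positivity) (by linarith)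
    rw [pow_succ', ← Set.union_sdiff_cancel hsub, 
      lintegral_union (show MeasurableSet (aBox α (2 * 2 ^ n) \ aBox α (2 ^ n)) from
        measurableSet_Icc.diff measurableSet_Icc) Set.disjoint_sdiff_right]
    push_cast
    rw [add_mul, one_mul]
    exact add_le_add ih h

theorem not_fin {d : ℕ} (hd : 0 < d) (α : Fin d → ℝ) (hα : ∀ i, 0 < α i) (η : ℝ)
    (hη : 0 < η) (hle : η ≤ ∑ i, 1 / α i) :
    (∫⁻ ξ : Fin d → ℝ, ENNReal.ofReal ((1 + Sa α ξ) ^ (-η))) = ⊤ := by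
  set c := (1 + d : ℝ) ^ (-η) * (2 ^ d * (1 - (2:ℝ) ^ (-(∑ i, 1 / α i)))) with hc
  have hc0 : 0 < c := by
    have : (2:ℝ) ^ (-(∑ i, 1 / α i)) < 1 :=
      Real.rpow_lt_one_of_one_lt_of_neg (by norm_num) (by linarith)
    have h2 : 0 < 1 - (2:ℝ) ^ (-(∑ i, 1 / α i)) := by linarith
    positivity
  by_contra hne
  obtain ⟨n, hn⟩ := ENNReal.exists_nat_mul_gt (ENNReal.ofReal_pos.2 hc0).ne' hne
  exact absurd (hn.trans_le ((box_bound hd α hα η hη hle n).trans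
    (setLIntegral_le_lintegral _ _))) (lt_irrefl _)

theorem one_dim (a b : ℝ) (ha : 0 < a) (hb : 0 < b) (hab : 1 < a * b) :
    (∫⁻ x : ℝ, ENNReal.ofReal ((1 + |x| ^ a) ^ (-b))) < ⊤ := by
  have key : ∀ x : ℝ, ENNReal.ofReal ((1 + |x| ^ a) ^ (-b)) ≤
      ENNReal.ofReal ((2:ℝ) ^ (a * b)) * ENNReal.ofReal ((1 + ‖x‖) ^ (-(a * b))) := by
    intro x
    rw [← ENNReal.ofReal_mul (by positivity)]
    apply ENNReal.ofReal_le_ofReal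
    rw [Real.norm_eq_abs]
    have h0 := abs_nonneg x
    have h1 : ((1 + |x|) / 2) ^ a ≤ 1 + |x| ^ a := by
      have hp := Real.rpow_nonneg h0 a
      rcases le_total |x| 1 with h | h
      · have : ((1 + |x|) / 2) ^ a ≤ 1 := Real.rpow_le_one (by linarith) (by linarith) ha.le
        linarith
      · have : ((1 + |x|) / 2) ^ a ≤ |x| ^ a :=
          Real.rpow_le_rpow (by linarith) (by linarith) ha.le
        linarith
    calc (1 + |x| ^ a) ^ (-b) ≤ (((1 + |x|) / 2) ^ a) ^ (-b) :=
          Real.rpow_le_rpow_of_nonpos (by positivity) h1 (by linarith)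
      _ = (2:ℝ) ^ (a * b) * (1 + |x|) ^ (-(a * b)) := by
          rw [← Real.rpow_mul (by positivity), Real.div_rpow (by positivity) (by norm_num),
            mul_neg, Real.rpow_neg (by norm_num : (0:ℝ) ≤ 2), div_inv_eq_mul, mul_comm]
  refine (lintegral_mono key).trans_lt ?_
  rw [lintegral_const_mul' _ _ ENNReal.ofReal_ne_top]
  exact ENNReal.mul_lt_top ENNReal.ofReal_lt_top
    (finite_integral_one_add_norm (by simpa using hab))

theorem lintegral_prod_fin (d : ℕ) (f : Fin d → ℝ → ENNReal) (hf : ∀ i, Measurable (f i)) :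
    ∫⁻ ξ : Fin d → ℝ, ∏ i, f i (ξ i) = ∏ i, ∫⁻ x, f i x := by
  induction d with
  | zero => simp [volume_pi]
  | succ n ih =>
    have hmp := (volume_preserving_piFinSuccAbove (fun _ : Fin (n + 1) => ℝ) 0).symm
    rw [← hmp.lintegral_comp_emb (MeasurableEquiv.measurableEmbedding _)]
    simp_rw [Fin.prod_univ_succ]
    rw [← ih (fun i => f i.succ) (fun i => hf _), Measure.volume_eq_prod,
      ← lintegral_prod_mul (hf 0).aemeasurable
        (Finset.measurable_prod _ fun i _ => (hf i.succ).comp (measurable_pi_apply i)).aemeasurable]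
    simp [MeasurableEquiv.piFinSuccAbove]

theorem stmt17 {d : ℕ} (hd : 0 < d) (α : Fin d → ℝ)
    (hα : ∀ i, 0 < α i ∧ α i ≤ 2) (η : ℝ) (hη : 0 < η) :
    (∫⁻ ξ : Fin d → ℝ, ENNReal.ofReal ((1 + Sa α ξ) ^ (-η))) < ⊤ ↔
      (∑ i, 1 / α i) < η := by
  have hα0 : ∀ i, 0 < α i := fun i => (hα i).1
  constructor
  · intro h
    by_contra hle
    exact h.ne (not_fin hd α hα0 η hη (not_lt.1 hle))
  · intro h
    set σ := ∑ i, 1 / α i with hσ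
    have hσ0 : 0 < σ :=
      Finset.sum_pos (fun i _ => one_div_pos.2 (hα0 i)) ⟨⟨0, hd⟩, Finset.mem_univ _⟩
    have hsum : ∑ i, -(η / σ * (1 / α i)) = -η := by
      rw [Finset.sum_neg_distrib, ← Finset.mul_sum, ← hσ]
      field_simp
    have key : ∀ ξ : Fin d → ℝ, ENNReal.ofReal ((1 + Sa α ξ) ^ (-η)) ≤
        ∏ i, ENNReal.ofReal ((1 + |ξ i| ^ α i) ^ (-(η / σ * (1 / α i)))) := by
      intro ξ
      have hS := Sa_nonneg α ξ
      rw [← ENNReal.ofReal_prod_of_nonneg (fun i _ => by positivity), ← hsum,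
        Real.rpow_sum_of_pos (by linarith)]
      apply ENNReal.ofReal_le_ofReal
      apply Finset.prod_le_prod (fun i _ => by positivity)
      intro i _
      apply Real.rpow_le_rpow_of_nonpos (by positivity)
      · have : |ξ i| ^ α i ≤ Sa α ξ :=
          Finset.single_le_sum (f := fun i => |ξ i| ^ α i)
            (fun j _ => Real.rpow_nonneg (abs_nonneg _) _) (Finset.mem_univ i)
        linarith
      · have := hα0 i
        have : 0 ≤ η / σ * (1 / α i) := by positivity
        linarith
    refine (lintegral_mono key).trans_lt ?_
    rw [lintegral_prod_fin d
      (f := fun i x => ENNReal.ofReal ((1 + |x| ^ α i) ^ (-(η / σ * (1 / α i)))))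
      (fun i => by fun_prop)]
    apply ENNReal.prod_lt_top
    intro i _
    have hi := hα0 i
    apply one_dim _ _ hi (by positivity)
    have : α i * (η / σ * (1 / α i)) = η / σ := by field_simp
    rw [this, one_lt_div hσ0]
    exact h
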